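/- arXiv:math/0408252 — 2 statements merged into one kernel-verified Lean document; each statement's English description precedes it below -/
import Mathlib

section
/- Let f and g be elements of G with reduced forms (x_1, …, x_r) and (y_1, …, y_r) respectively, where r > 1. Then f and g are H-conjugate if and only if there exist elements h_0, h_1, …, h_r of H with h_r = h_0 such that x_i = h_{i-1}^{-1} y_i h_i for every i = 1, 2, …, r. -/
universe u
open Monoid

/-- The `Bool`-indexed family of groups with value `A` at `true` and `B` at `false`. -/
def famG (A B : Type u) : Bool → Type u := fun i => Bool.rec B A i

instance famGGroup {A B : Type u} [Group A] [Group B] : ∀ i, Group (famG A B i) :=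
  fun i => Bool.rec (motive := fun i => Group (famG A B i)) ‹Group B› ‹Group A› i

/-- The `Bool`-indexed family of homomorphisms from `H`, with value `φA` at `true`
and `φB` at `false`. -/
def famPhi {A B H : Type u} [Group A] [Group B] [Group H] (φA : H →* A) (φB : H →* B) :
    ∀ i, H →* famG A B i :=
  fun i => Bool.rec (motive := fun i => H →* famG A B i) φB φA i

/-- The free product of `A` and `B` with amalgamated subgroup `H` (along the injections
`φA : H →* A` and `φB : H →* B`), realized as the pushout of `φA` and `φB`. -/
def Amal {A B H : Type u} [Group A] [Group B] [Group H] (φA : H →* A) (φB : H →* B) : Type u :=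
  PushoutI (famPhi φA φB)

instance {A B H : Type u} [Group A] [Group B] [Group H] (φA : H →* A) (φB : H →* B) :
    Group (Amal φA φB) :=
  inferInstanceAs (Group (PushoutI (famPhi φA φB)))

/-- The canonical homomorphism `A →* Amal φA φB`. -/
def inA {A B H : Type u} [Group A] [Group B] [Group H] (φA : H →* A) (φB : H →* B) :
    A →* Amal φA φB :=
  PushoutI.of (φ := famPhi φA φB) true

/-- The canonical homomorphism `B →* Amal φA φB`. -/
def inB {A B H : Type u} [Group A] [Group B] [Group H] (φA : H →* A) (φB : H →* B) :
    B →* Amal φA φB :=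
  PushoutI.of (φ := famPhi φA φB) false

/-- The canonical homomorphism `H →* Amal φA φB`. -/
def inH {A B H : Type u} [Group A] [Group B] [Group H] (φA : H →* A) (φB : H →* B) :
    H →* Amal φA φB :=
  PushoutI.base (famPhi φA φB)

/-- `IsReducedForm P Q R x g` says that the tuple `x = (x 0, …, x (r-1))` is a reduced form of
the element `g`, with respect to subgroups `P`, `Q`, `R` (playing the roles of the free factors
`A`, `B` and the amalgamated subgroup `H`): `g` is the (ordered) product of the components, every
component lies in `P ∪ Q`, and if `r > 1` then no component lies in `R` and no two consecutive
components lie both in `P` or both in `Q`. -/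
def IsReducedForm {G : Type*} [Group G] (P Q R : Subgroup G) {r : ℕ}
    (x : Fin r → G) (g : G) : Prop :=
  1 ≤ r ∧ (List.ofFn x).prod = g ∧ (∀ i, x i ∈ P ∨ x i ∈ Q) ∧
    (1 < r → (∀ i, x i ∉ R) ∧
      ∀ i : ℕ, (h : i + 1 < r) →
        ¬(x ⟨i, by omega⟩ ∈ P ∧ x ⟨i + 1, h⟩ ∈ P) ∧
        ¬(x ⟨i, by omega⟩ ∈ Q ∧ x ⟨i + 1, h⟩ ∈ Q))

/-!
The heart of the argument is that two reduced words `l`, `m` with `m.prod⁻¹ * h * l.prod ∈ H`, for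
some `h ∈ H`, have `b⁻¹ * h * a ∈ H` for their first letters `a`, `b`: otherwise `m⁻¹ * h * l`,
with `b⁻¹ * h * a` merged into one letter when `a` and `b` come from the same factor, would be a
nonempty reduced word with product in `H`. Cancelling first letters repeatedly, all prefixes
satisfy `(y₁ ⋯ yᵢ)⁻¹ * h * (x₁ ⋯ xᵢ) ∈ H`, and these elements are the required `hᵢ`.
-/

section Group

variable {G : Type*} [Group G]

theorem forall_eq_inv_mul_mul_iff_partialProd {n : ℕ} {x y : Fin n → G} {u : Fin (n + 1) → G} :
    (∀ i : Fin n, x i = (u i.castSucc)⁻¹ * y i * u i.succ) ↔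
      ∀ i, u i = (Fin.partialProd y i)⁻¹ * u 0 * Fin.partialProd x i := by
  refine ⟨fun hu i => ?_, fun hu i => ?_⟩
  · induction i using Fin.induction with
    | zero => simp
    | succ i ih =>
      rw [Fin.partialProd_succ, Fin.partialProd_succ, hu i, ih]
      group
  · rw [hu i.castSucc, hu i.succ, Fin.partialProd_succ, Fin.partialProd_succ]
    group

variable {ι : Type*} {P : ι → Subgroup G} {R : Subgroup G} {a b : G} {l m : List G}

/-- A word in the elements of the subgroups `P i`, `i : ι`, is reduced relative to `R` if none of
its letters lies in `R` and no two consecutive letters lie in a common `P i`. Letters are plain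
elements of `G`, not tagged with the index of a subgroup containing them. -/
structure IsReducedWord (P : ι → Subgroup G) (R : Subgroup G) (l : List G) : Prop where
  exists_mem : ∀ a ∈ l, ∃ i, a ∈ P i
  notMem : ∀ a ∈ l, a ∉ R
  isChain : l.IsChain fun a b => ∀ i, a ∈ P i → b ∉ P i

namespace IsReducedWord

theorem of_cons (h : IsReducedWord P R (a :: l)) : IsReducedWord P R l where
  exists_mem c hc := h.exists_mem c (List.mem_cons_of_mem a hc)
  notMem c hc := h.notMem c (List.mem_cons_of_mem a hc)
  isChain := h.isChain.of_cons

theorem cons {i : ι} (h : IsReducedWord P R l) (ha : a ∈ P i) (haR : a ∉ R)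
    (hal : ∀ b ∈ l.head?, ∀ j, a ∈ P j → b ∉ P j) : IsReducedWord P R (a :: l) where
  exists_mem := List.forall_mem_cons.2 ⟨⟨i, ha⟩, h.exists_mem⟩
  notMem := List.forall_mem_cons.2 ⟨haR, h.notMem⟩
  isChain := List.isChain_cons.2 ⟨hal, h.isChain⟩

theorem inv_reverse (h : IsReducedWord P R l) :
    IsReducedWord P R (l.map fun a => a⁻¹).reverse where
  exists_mem := by simpa using fun a ha => h.exists_mem a⁻¹ ha
  notMem := by simpa using fun a ha => R.inv_mem_iff.not.1 (h.notMem a⁻¹ ha)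
  isChain := by
    rw [List.isChain_reverse, List.isChain_map]
    exact h.isChain.imp fun a b hab i hb ha =>
      hab i ((P i).inv_mem_iff.1 ha) ((P i).inv_mem_iff.1 hb)

theorem inv_reverse_append_cons (hm : IsReducedWord P R (a⁻¹ :: m))
    (hl : IsReducedWord P R (a :: l)) :
    IsReducedWord P R ((m.map fun b => b⁻¹).reverse ++ a :: l) := by
  have hm' : IsReducedWord P R ((m.map fun b => b⁻¹).reverse ++ [a]) := by
    simpa using hm.inv_reverse
  refine ⟨fun c hc => ?_, fun c hc => ?_, List.isChain_split.2 ⟨hm'.isChain, hl.isChain⟩⟩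
  all_goals rcases List.mem_append.1 hc with hc | hc
  · exact hm'.exists_mem c (List.mem_append_left _ hc)
  · exact hl.exists_mem c hc
  · exact hm'.notMem c (List.mem_append_left _ hc)
  · exact hl.notMem c hc

end IsReducedWord

/-- The subgroups `P i` of `G` are embedded in `G` as the factors of a free product with amalgamated
subgroup `R`, which need not be all of `G`. This is expressed internally, through the normal form
theorem for amalgamated free products. -/
structure IsAmalgam (P : ι → Subgroup G) (R : Subgroup G) : Prop where
  le : ∀ i, R ≤ P i
  inf_le : Pairwise fun i j => P i ⊓ P j ≤ R
  eq_nil_of_prod_mem : ∀ {l : List G}, IsReducedWord P R l → l.prod ∈ R → l = []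

namespace IsAmalgam

variable {h k : G}

theorem isReducedWord_replace_head {i : ι} (hPR : IsAmalgam P R) (hl : IsReducedWord P R (a :: l))
    (ha : a ∈ P i) (hb : b ∈ P i) (hbR : b ∉ R) : IsReducedWord P R (b :: l) := by
  refine hl.of_cons.cons hb hbR fun c hc j hbj => ?_
  obtain rfl : i = j := by_contra fun hij => hbR (hPR.inf_le hij ⟨hb, hbj⟩)
  exact (List.isChain_cons.1 hl.isChain).1 c hc i ha

theorem inv_prod_mul_prod_notMem (hPR : IsAmalgam P R) (hm : IsReducedWord P R (a⁻¹ :: m))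
    (hl : IsReducedWord P R (a :: l)) : m.prod⁻¹ * (a :: l).prod ∉ R := by
  intro hR
  rw [List.prod_inv_reverse, ← List.prod_append] at hR
  exact List.append_ne_nil_of_right_ne_nil _ (List.cons_ne_nil a l)
    (hPR.eq_nil_of_prod_mem (hm.inv_reverse_append_cons hl) hR)

theorem head_inv_mul_head_mem (hPR : IsAmalgam P R) (hl : IsReducedWord P R (a :: l))
    (hm : IsReducedWord P R (b :: m)) (hR : (b :: m).prod⁻¹ * (a :: l).prod ∈ R) :
    b⁻¹ * a ∈ R := by
  by_contra hba
  by_cases hab : ∃ i, a ∈ P i ∧ b ∈ P i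
  · obtain ⟨i, ha, hb⟩ := hab
    have hbaP : b⁻¹ * a ∈ P i := mul_mem (inv_mem hb) ha
    have hm' : IsReducedWord P R ((b⁻¹ * a)⁻¹ :: m) :=
      hPR.isReducedWord_replace_head hm hb (inv_mem hbaP) (R.inv_mem_iff.not.2 hba)
    have hl' : IsReducedWord P R (b⁻¹ * a :: l) :=
      hPR.isReducedWord_replace_head hl ha hbaP hba
    refine hPR.inv_prod_mul_prod_notMem hm' hl' ?_
    simpa [mul_assoc] using hR
  · obtain ⟨i, ha⟩ := hl.exists_mem a List.mem_cons_self
    have haR : a ∉ R := hl.notMem a List.mem_cons_self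
    have hm' : IsReducedWord P R (a⁻¹ :: b :: m) := by
      refine hm.cons (inv_mem ha) (R.inv_mem_iff.not.2 haR) fun c hc j haj hcj => hab ⟨j, ?_⟩
      obtain rfl : b = c := by simpa using hc
      exact ⟨(P j).inv_mem_iff.1 haj, hcj⟩
    exact hPR.inv_prod_mul_prod_notMem hm' hl hR

theorem head_inv_mul_mul_head_mem (hPR : IsAmalgam P R) (hl : IsReducedWord P R (a :: l))
    (hm : IsReducedWord P R (b :: m)) (hh : h ∈ R)
    (hR : (b :: m).prod⁻¹ * h * (a :: l).prod ∈ R) : b⁻¹ * h * a ∈ R := by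
  obtain ⟨i, ha⟩ := hl.exists_mem a List.mem_cons_self
  have hhaR : h * a ∉ R := (R.mul_mem_cancel_left hh).not.2 (hl.notMem a List.mem_cons_self)
  have hhl : IsReducedWord P R (h * a :: l) :=
    hPR.isReducedWord_replace_head hl ha (mul_mem (hPR.le i hh) ha) hhaR
  rw [mul_assoc]
  refine hPR.head_inv_mul_head_mem hhl hm ?_
  simpa only [List.prod_cons, mul_assoc] using hR

theorem prod_take_inv_mul_mul_prod_take_mem (hPR : IsAmalgam P R) (hl : IsReducedWord P R l)
    (hm : IsReducedWord P R m) (hh : h ∈ R) (hR : m.prod⁻¹ * h * l.prod ∈ R) (n : ℕ) :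
    (m.take n).prod⁻¹ * h * (l.take n).prod ∈ R := by
  induction n generalizing l m h with
  | zero => simpa using hh
  | succ n ih =>
    match l, m with
    | [], m =>
      have hm_prod : m.prod ∈ R := by simpa [R.mul_mem_cancel_right hh] using hR
      simpa [hPR.eq_nil_of_prod_mem hm hm_prod] using hh
    | l, [] =>
      have hl_prod : l.prod ∈ R := by simpa [R.mul_mem_cancel_left hh] using hR
      simpa [hPR.eq_nil_of_prod_mem hl hl_prod] using hh
    | a :: l, b :: m =>
      have hba : b⁻¹ * h * a ∈ R := hPR.head_inv_mul_mul_head_mem hl hm hh hR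
      have htail : m.prod⁻¹ * (b⁻¹ * h * a) * l.prod ∈ R := by simpa [mul_assoc] using hR
      simpa [mul_assoc] using ih hl.of_cons hm.of_cons hba htail

theorem prod_eq_inv_mul_prod_mul_iff (hPR : IsAmalgam P R) {n : ℕ} {x y : Fin n → G}
    (hx : IsReducedWord P R (List.ofFn x)) (hy : IsReducedWord P R (List.ofFn y))
    (hh : h ∈ R) (hk : k ∈ R) :
    (List.ofFn x).prod = h⁻¹ * (List.ofFn y).prod * k ↔
      ∃ u : Fin (n + 1) → G, (∀ i, u i ∈ R) ∧ u 0 = h ∧ u (Fin.last n) = k ∧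
        ∀ i : Fin n, x i = (u i.castSucc)⁻¹ * y i * u i.succ := by
  have partialProd_last (z : Fin n → G) : Fin.partialProd z (Fin.last n) = (List.ofFn z).prod := by
    simp [Fin.partialProd, List.take_of_length_le]
  simp only [forall_eq_inv_mul_mul_iff_partialProd]
  constructor
  · intro hxy
    have hk_eq : (List.ofFn y).prod⁻¹ * h * (List.ofFn x).prod = k := by rw [hxy]; group
    refine ⟨fun i => (Fin.partialProd y i)⁻¹ * h * Fin.partialProd x i, fun i => ?_, by simp, ?_,
      by simp⟩
    · exact hPR.prod_take_inv_mul_mul_prod_take_mem hx hy hh (hk_eq ▸ hk) i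
    · simpa only [partialProd_last] using hk_eq
  · rintro ⟨u, -, rfl, rfl, hu⟩
    rw [hu (Fin.last n), partialProd_last, partialProd_last]
    group

end IsAmalgam

theorem IsReducedForm.isReducedWord {P : Bool → Subgroup G} {r : ℕ} (hr : 1 < r)
    {x : Fin r → G} {g : G} (hx : IsReducedForm (P true) (P false) R x g) :
    IsReducedWord P R (List.ofFn x) := by
  obtain ⟨-, -, hmem, hred⟩ := hx
  obtain ⟨hR, hconsec⟩ := hred hr
  refine ⟨?_, by simpa using hR, List.isChain_iff_getElem.2 fun i hi => ?_⟩
  · simpa [or_comm] using hmem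
  · have hir : i + 1 < r := by simpa using hi
    simpa [and_comm] using hconsec i hir

end Group

section PushoutI

variable {ι H : Type*} {K : ι → Type*} [∀ i, Group (K i)] [Group H] {φ : ∀ i, H →* K i}

theorem eq_nil_of_isReducedWord_of_prod_mem_range_base (hφ : ∀ i, Function.Injective (φ i))
    {l : List (PushoutI φ)}
    (hl : IsReducedWord (fun i => (PushoutI.of (φ := φ) i).range) (PushoutI.base φ).range l)
    (hprod : l.prod ∈ (PushoutI.base φ).range) : l = [] := by
  obtain ⟨w, rfl⟩ : l ∈ Set.range (List.map fun p : Σ i, K i => PushoutI.of (φ := φ) p.1 p.2) := by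
    rw [Set.range_list_map]
    intro a ha
    obtain ⟨i, g, hg⟩ := hl.exists_mem a ha
    exact ⟨⟨i, g⟩, hg⟩
  have hw : ∀ p ∈ w, p.2 ∉ (φ p.1).range := by
    rintro p hp ⟨c, hc⟩
    exact hl.notMem _ (List.mem_map_of_mem hp) ⟨c, by rw [← hc, PushoutI.of_apply_eq_base]⟩
  let W : CoprodI.Word K :=
    { toList := w
      ne_one := fun p hp h1 => hw p hp (h1 ▸ one_mem _)
      chain_ne := ((List.isChain_map _).1 hl.isChain).imp fun p q hpq hidx =>
        hpq q.1 (hidx ▸ ⟨p.2, rfl⟩) ⟨q.2, rfl⟩ }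
  have hW : PushoutI.ofCoprodI W.prod ∈ (PushoutI.base φ).range := by
    simpa [W, CoprodI.Word.prod, map_list_prod, Function.comp_def] using hprod
  have hW_empty : W = .empty := PushoutI.Reduced.eq_empty_of_mem_range hφ hw hW
  exact congrArg (List.map _) (congrArg CoprodI.Word.toList hW_empty)

theorem isAmalgam_range_of (hφ : ∀ i, Function.Injective (φ i)) :
    IsAmalgam (fun i => (PushoutI.of (φ := φ) i).range) (PushoutI.base φ).range where
  le := by
    rintro i _ ⟨c, rfl⟩
    exact ⟨φ i c, PushoutI.of_apply_eq_base φ i c⟩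
  inf_le _ _ hij := (PushoutI.inf_of_range_eq_base_range hφ hij).le
  eq_nil_of_prod_mem := eq_nil_of_isReducedWord_of_prod_mem_range_base hφ

theorem hConjugate_iff_exists_sequence_general (hφ : ∀ i, Function.Injective (φ i)) {r : ℕ}
    {x y : Fin r → PushoutI φ}
    (hx : IsReducedWord (fun i => (PushoutI.of (φ := φ) i).range) (PushoutI.base φ).range
      (List.ofFn x))
    (hy : IsReducedWord (fun i => (PushoutI.of (φ := φ) i).range) (PushoutI.base φ).range
      (List.ofFn y)) :
    (∃ h ∈ (PushoutI.base φ).range, (List.ofFn x).prod = h⁻¹ * (List.ofFn y).prod * h) ↔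
      ∃ h : Fin (r + 1) → PushoutI φ, (∀ i, h i ∈ (PushoutI.base φ).range) ∧
        h (Fin.last r) = h 0 ∧
        ∀ i : Fin r, x i = (h i.castSucc)⁻¹ * y i * h i.succ := by
  have hiff {h : PushoutI φ} (hh : h ∈ (PushoutI.base φ).range) :=
    (isAmalgam_range_of hφ).prod_eq_inv_mul_prod_mul_iff hx hy hh hh
  constructor
  · rintro ⟨h, hh, hconj⟩
    obtain ⟨u, hu, h_first, h_last, hxy⟩ := (hiff hh).1 hconj
    exact ⟨u, hu, h_last.trans h_first.symm, hxy⟩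
  · rintro ⟨u, hu, h_closed, hxy⟩
    exact ⟨u 0, hu 0, (hiff (hu 0)).2 ⟨u, hu, rfl, h_closed, hxy⟩⟩

end PushoutI

/-- Let `f` and `g` be elements of the amalgamated free product `G = (A*B; H)` with reduced
forms `(x_1, …, x_r)` and `(y_1, …, y_r)`, where `r > 1`.  Then `f` and `g` are `H`-conjugate
iff there exist elements `h_0, h_1, …, h_r` of `H` with `h_r = h_0` such that
`x_i = h_{i-1}⁻¹ y_i h_i` for every `i`. -/
theorem hConjugate_iff_exists_sequence {A B H : Type u} [Group A] [Group B] [Group H]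
    (φA : H →* A) (φB : H →* B)
    (hφA : Function.Injective φA) (hφB : Function.Injective φB)
    {r : ℕ} (hr : 1 < r) (f g : Amal φA φB) (x y : Fin r → Amal φA φB)
    (hx : IsReducedForm (inA φA φB).range (inB φA φB).range (inH φA φB).range x f)
    (hy : IsReducedForm (inA φA φB).range (inB φA φB).range (inH φA φB).range y g) :
    (∃ h ∈ (inH φA φB).range, f = h⁻¹ * g * h) ↔
      ∃ h : Fin (r + 1) → Amal φA φB, (∀ i, h i ∈ (inH φA φB).range) ∧
        h (Fin.last r) = h 0 ∧
        ∀ i : Fin r, x i = (h i.castSucc)⁻¹ * y i * h i.succ := by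
  obtain rfl := hx.2.1
  obtain rfl := hy.2.1
  exact hConjugate_iff_exists_sequence_general (φ := famPhi φA φB) (Bool.rec hφB hφA)
    (hx.isReducedWord hr) (hy.isReducedWord hr)
end

section
/- Suppose that H is contained in the center of A and in the center of B. Then for any element f of G not belonging to A, the set f^{-1} A f ∩ A = { f^{-1} x f : x ∈ A } ∩ A equals H. -/
universe u
open Monoid

/-!
A central subgroup is normal. If every `φ i` has normal range, then so has the base group in the
pushout, and collapsing it maps the pushout onto the free product of the quotients
`G i ⧸ (φ i).range`, with the base group as the kernel. There the image of `f⁻¹ A f ∩ A` is trivial,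
because the factors of a free product are malnormal: in an equation `a * u = u * b` with `a` and `b`
in the factor `i` and `u` outside it, we may assume that the reduced word of `u` does not begin in
the factor `i`. The word of `u * b` then does not begin there either, whereas that of `a * u` does
unless `a = 1`.
-/

section FreeProduct

variable {ι : Type*} {M : ι → Type*} [∀ i, Monoid (M i)]

open Classical in
/-- The index of the factor in which the reduced word of an element of a free product begins, and
`none` for the element `1`. -/
noncomputable def leadingIdx (u : CoprodI M) : Option ι :=
  (CoprodI.Word.equiv u).fstIdx

theorem leadingIdx_prod (w : CoprodI.Word M) : leadingIdx w.prod = w.fstIdx := by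
  classical
  exact congrArg CoprodI.Word.fstIdx (CoprodI.Word.equiv.apply_symm_apply w)

theorem exists_word_prod_eq (u : CoprodI M) : ∃ w : CoprodI.Word M, w.prod = u := by
  classical
  exact CoprodI.Word.equiv.symm.surjective u

theorem leadingIdx_one : leadingIdx (1 : CoprodI M) = none :=
  leadingIdx_prod CoprodI.Word.empty

theorem leadingIdx_of_mul {i : ι} {m : M i} {u : CoprodI M} (hm : m ≠ 1)
    (hu : leadingIdx u ≠ some i) : leadingIdx (CoprodI.of m * u) = some i := by
  obtain ⟨w, rfl⟩ := exists_word_prod_eq u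
  rw [leadingIdx_prod] at hu
  rw [← CoprodI.Word.prod_cons i m w hm hu, leadingIdx_prod, CoprodI.Word.fstIdx_cons]

theorem leadingIdx_of_ne {i j : ι} (hij : i ≠ j) (m : M i) :
    leadingIdx (CoprodI.of m) ≠ some j := by
  rcases eq_or_ne m 1 with rfl | hm
  · simp [leadingIdx_one]
  · rw [← mul_one (CoprodI.of m), leadingIdx_of_mul hm (by simp [leadingIdx_one])]
    simpa using hij

theorem exists_eq_of_mul_leadingIdx_ne (i : ι) (u : CoprodI M) :
    ∃ (m : M i) (v : CoprodI M), leadingIdx v ≠ some i ∧ u = CoprodI.of m * v := by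
  classical
  obtain ⟨w, rfl⟩ := exists_word_prod_eq u
  let p := CoprodI.Word.equivPair i w
  refine ⟨p.head, p.tail.prod, (leadingIdx_prod p.tail).trans_ne p.fstIdx_ne, ?_⟩
  rw [← CoprodI.Word.prod_rcons, ← CoprodI.Word.equivPair_symm, Equiv.symm_apply_apply]

theorem leadingIdx_mul_of {i : ι} {u : CoprodI M}
    (hu : u ∉ MonoidHom.mrange (CoprodI.of : M i →* CoprodI M)) (b : M i) :
    leadingIdx (u * CoprodI.of b) = leadingIdx u := by
  obtain ⟨w, rfl⟩ := exists_word_prod_eq u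
  induction w using CoprodI.Word.consRecOn with
  | empty => exact absurd (one_mem _) hu
  | cons j g w hw hg ih =>
    rw [CoprodI.Word.prod_cons] at hu ⊢
    rw [← leadingIdx_prod] at hw
    rw [mul_assoc, leadingIdx_of_mul hg hw]
    apply leadingIdx_of_mul hg
    by_cases hwi : w.prod ∈ MonoidHom.mrange (CoprodI.of : M i →* CoprodI M)
    · have hij : i ≠ j := by
        rintro rfl
        exact hu (mul_mem ⟨g, rfl⟩ hwi)
      obtain ⟨c, hc⟩ := hwi
      rw [← hc, ← map_mul]
      exact leadingIdx_of_ne hij _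
    · rwa [ih hwi]

theorem eq_one_of_of_mul_eq_mul_of {G : ι → Type*} [∀ i, Group (G i)] {i : ι} {u : CoprodI G}
    (hu : u ∉ (CoprodI.of : G i →* CoprodI G).range) {a b : G i}
    (h : CoprodI.of a * u = u * CoprodI.of b) : a = 1 := by
  obtain ⟨m, v, hv, rfl⟩ := exists_eq_of_mul_leadingIdx_ne i u
  have hv_range : v ∉ (CoprodI.of : G i →* CoprodI G).range := fun hvi ↦
    hu (mul_mem ⟨m, rfl⟩ hvi)
  have hconj : CoprodI.of (m⁻¹ * a * m) * v = v * CoprodI.of b := by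
    simp only [map_mul, map_inv, mul_assoc, h, inv_mul_cancel_left]
  by_contra ha
  have hne : m⁻¹ * a * m ≠ 1 := by simpa [mul_assoc, inv_mul_eq_one] using ha
  apply hv
  rw [← leadingIdx_mul_of hv_range b, ← hconj, leadingIdx_of_mul hne hv]

end FreeProduct

theorem range_normal_of_mem_center {G K : Type*} [Group G] [Group K] {φ : K →* G}
    (hφ : ∀ k, φ k ∈ Subgroup.center G) : φ.range.Normal where
  conj_mem := by
    rintro _ ⟨k, rfl⟩ g
    rw [Subgroup.mem_center_iff.1 (hφ k) g, mul_inv_cancel_right]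
    exact ⟨k, rfl⟩

section Pushout

variable {ι : Type*} {G : ι → Type*} {K : Type*} [∀ i, Group (G i)] [Group K]
  {φ : ∀ i, K →* G i}

theorem base_range_le_of_range (i : ι) :
    (PushoutI.base φ).range ≤ (PushoutI.of (φ := φ) i).range := by
  rintro _ ⟨k, rfl⟩
  exact ⟨φ i k, PushoutI.of_apply_eq_base φ i k⟩

variable (φ) in
/-- The quotient of the factor `G i` by the image of the base group, `(φ i).range`. -/
abbrev BaseQuotient (i : ι) : Type _ :=
  G i ⧸ (φ i).range

variable [hφ : ∀ i, (φ i).range.Normal]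

instance base_range_normal : (PushoutI.base φ).range.Normal where
  conj_mem := by
    intro x hx f
    induction f using PushoutI.induction_on generalizing x with
    | of i g =>
      obtain ⟨k, rfl⟩ := hx
      obtain ⟨l, hl⟩ := (hφ i).conj_mem (φ i k) ⟨k, rfl⟩ g
      refine ⟨l, ?_⟩
      simp only [← PushoutI.of_apply_eq_base φ i, hl, map_mul, map_inv]
    | base k => exact mul_mem (mul_mem ⟨k, rfl⟩ hx) (inv_mem ⟨k, rfl⟩)
    | mul f g hf hg =>
      simpa only [mul_inv_rev, mul_assoc] using hf _ (hg _ hx)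

variable (φ) in
/-- The homomorphism from the pushout to the free product of the quotients of the factors by the
base group, which collapses the base group. -/
def pushoutToCoprodQuotient : PushoutI φ →* CoprodI (BaseQuotient φ) :=
  PushoutI.lift (fun i ↦ CoprodI.of.comp (QuotientGroup.mk' (φ i).range)) 1 fun i ↦ by
    ext k
    have hk : (φ i k : BaseQuotient φ i) = 1 := (QuotientGroup.eq_one_iff _).2 ⟨k, rfl⟩
    simp [hk]

theorem pushoutToCoprodQuotient_of {i : ι} (g : G i) :
    pushoutToCoprodQuotient φ (PushoutI.of i g) =
      CoprodI.of (M := BaseQuotient φ) (g : BaseQuotient φ i) :=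
  PushoutI.lift_of ..

theorem ker_pushoutToCoprodQuotient :
    (pushoutToCoprodQuotient φ).ker = (PushoutI.base φ).range := by
  apply le_antisymm
  · let ψ : CoprodI (BaseQuotient φ) →* PushoutI φ ⧸ (PushoutI.base φ).range :=
      CoprodI.lift fun i ↦ QuotientGroup.map _ _ (PushoutI.of i) <| by
        rintro _ ⟨k, rfl⟩
        exact ⟨k, (PushoutI.of_apply_eq_base φ i k).symm⟩
    have hψ : ψ.comp (pushoutToCoprodQuotient φ) = QuotientGroup.mk' _ := by
      apply PushoutI.hom_ext
      · intro i
        ext g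
        simp [ψ, pushoutToCoprodQuotient_of]
      · ext k
        have hk : (PushoutI.base φ k : PushoutI φ ⧸ (PushoutI.base φ).range) = 1 :=
          (QuotientGroup.eq_one_iff _).2 ⟨k, rfl⟩
        simp [pushoutToCoprodQuotient, hk]
    intro x hx
    rw [← QuotientGroup.ker_mk' (PushoutI.base φ).range, ← hψ, MonoidHom.mem_ker,
      MonoidHom.comp_apply, MonoidHom.mem_ker.1 hx, map_one]
  · rintro _ ⟨k, rfl⟩
    exact PushoutI.lift_base ..

theorem pushoutToCoprodQuotient_mem_of_range_iff {i : ι} {f : PushoutI φ} :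
    pushoutToCoprodQuotient φ f ∈ (CoprodI.of : BaseQuotient φ i →* _).range ↔
      f ∈ (PushoutI.of (φ := φ) i).range := by
  constructor
  · rintro ⟨g, hg⟩
    obtain ⟨g, rfl⟩ := QuotientGroup.mk_surjective g
    have hbase : f⁻¹ * PushoutI.of i g ∈ (PushoutI.base φ).range := by
      rw [← ker_pushoutToCoprodQuotient, ← MonoidHom.eq_iff, pushoutToCoprodQuotient_of, hg]
    have hg_range : PushoutI.of i g ∈ (PushoutI.of (φ := φ) i).range := ⟨g, rfl⟩
    exact inv_mem_iff.1 <|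
      (Subgroup.mul_mem_cancel_right _ hg_range).1 (base_range_le_of_range i hbase)
  · rintro ⟨g, rfl⟩
    exact ⟨g, (pushoutToCoprodQuotient_of g).symm⟩

theorem conj_inter_eq_base_general {i : ι} {f : PushoutI φ}
    (hf : f ∉ (PushoutI.of (φ := φ) i).range) :
    ((fun x ↦ f⁻¹ * x * f) '' ((PushoutI.of (φ := φ) i).range : Set (PushoutI φ))) ∩
        ((PushoutI.of (φ := φ) i).range : Set (PushoutI φ)) =
      ((PushoutI.base φ).range : Set (PushoutI φ)) := by
  apply Set.Subset.antisymm
  · rintro _ ⟨⟨_, ⟨a, rfl⟩, rfl⟩, b, hab⟩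
    have hcomm :
        CoprodI.of (M := BaseQuotient φ) (a : BaseQuotient φ i) * pushoutToCoprodQuotient φ f =
        pushoutToCoprodQuotient φ f * CoprodI.of (M := BaseQuotient φ) (b : BaseQuotient φ i) := by
      simp only [← pushoutToCoprodQuotient_of, ← map_mul, hab, mul_assoc, mul_inv_cancel_left]
    have ha : (a : BaseQuotient φ i) = 1 :=
      eq_one_of_of_mul_eq_mul_of (mt pushoutToCoprodQuotient_mem_of_range_iff.1 hf) hcomm
    obtain ⟨k, rfl⟩ := (QuotientGroup.eq_one_iff a).1 ha
    rw [PushoutI.of_apply_eq_base]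
    exact base_range_normal.conj_mem' _ ⟨k, rfl⟩ f
  · intro z hz
    refine ⟨⟨f * z * f⁻¹, ?_, by group⟩, base_range_le_of_range i hz⟩
    exact base_range_le_of_range i (base_range_normal.conj_mem z hz f)

end Pushout

/-- If `H` is contained in the center of `A` and in the center of `B`, then for any element `f`
of the amalgamated free product `G = (A*B; H)` not belonging to `A`, the set
`f⁻¹ A f ∩ A` equals `H` (all viewed inside `G`). -/
theorem conj_inter_eq_base {A B H : Type u} [Group A] [Group B] [Group H]
    (φA : H →* A) (φB : H →* B)
    (hφA : Function.Injective φA) (hφB : Function.Injective φB)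
    (hcA : ∀ h : H, φA h ∈ Subgroup.center A)
    (hcB : ∀ h : H, φB h ∈ Subgroup.center B)
    (f : Amal φA φB) (hf : f ∉ (inA φA φB).range) :
    ((fun x => f⁻¹ * x * f) '' ((inA φA φB).range : Set (Amal φA φB))) ∩
        ((inA φA φB).range : Set (Amal φA φB)) =
      ((inH φA φB).range : Set (Amal φA φB)) := by
  have hnormal (i : Bool) : (famPhi φA φB i).range.Normal := by
    cases i
    exacts [range_normal_of_mem_center hcB, range_normal_of_mem_center hcA]
  exact conj_inter_eq_base_general (φ := famPhi φA φB) hf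
end
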